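/- Fix real κ > 0, η > 0, a ∈ (0, 1/2), c > 1 and δ ∈ (0, 1). There exists f₀ > 0 such that for all f ∈ (0, f₀): D_f(0) ≠ 0, and for every R > f^a there exists r with (1 − δ)R < r < R such that |D_f(z)/D_f(0)| ≥ (e^{−7}·δ)^{c·4·(2eR)^{3/2}/(3f)} for every z ∈ ℂ with |z| = r. -/

import Mathlib

open Real

/-- Taylor coefficients of the Airy function `Ai`:
`a₀ = 3^{−2/3}/Γ(2/3)`, `a₁ = −3^{−1/3}/Γ(1/3)`, `a₂ = 0`,
`a_{k+3} = a_k/((k+3)(k+2))`. -/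
noncomputable def airyCoeff : ℕ → ℂ
  | 0 => (3 : ℂ) ^ (-(2 : ℂ) / 3) / Complex.Gamma (2 / 3)
  | 1 => -((3 : ℂ) ^ (-(1 : ℂ) / 3) / Complex.Gamma (1 / 3))
  | 2 => 0
  | (k + 3) => airyCoeff k / (((k : ℂ) + 3) * ((k : ℂ) + 2))

/-- The Airy function `Ai`, as the entire function with the above Taylor
coefficients at `0`. -/
noncomputable def Ai (z : ℂ) : ℂ := ∑' k : ℕ, airyCoeff k * z ^ k

/-- `ω = e^{2πi/3}` -/
noncomputable def ωc : ℂ := Complex.exp (2 * π * Complex.I / 3)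

/-- `W = f^{1/3}·e^{−iπ/6}/(2π)` -/
noncomputable def Wf (f : ℝ) : ℂ :=
  ((f ^ ((1 : ℝ) / 3) : ℝ) : ℂ) * Complex.exp (-(π : ℂ) * Complex.I / 6) / (2 * π)

/-- `α₊(z) = Ai(−ω(z − κf)f^{−2/3})·Ai(−(z − κf)f^{−2/3})` -/
noncomputable def alphaP (κ f : ℝ) (z : ℂ) : ℂ :=
  Ai (-ωc * (z - κ * f) * ((f ^ (-(2 : ℝ) / 3) : ℝ) : ℂ)) *
    Ai (-(z - κ * f) * ((f ^ (-(2 : ℝ) / 3) : ℝ) : ℂ))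

/-- `α₋(z) = Ai(−ω(z + κf)f^{−2/3})·Ai(−(z + κf)f^{−2/3})` -/
noncomputable def alphaM (κ f : ℝ) (z : ℂ) : ℂ :=
  Ai (-ωc * (z + κ * f) * ((f ^ (-(2 : ℝ) / 3) : ℝ) : ℂ)) *
    Ai (-(z + κ * f) * ((f ^ (-(2 : ℝ) / 3) : ℝ) : ℂ))

/-- `β₊(z) = Ai(−ω(z + κf)f^{−2/3})·Ai(−(z − κf)f^{−2/3})` -/
noncomputable def betaP (κ f : ℝ) (z : ℂ) : ℂ :=
  Ai (-ωc * (z + κ * f) * ((f ^ (-(2 : ℝ) / 3) : ℝ) : ℂ)) *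
    Ai (-(z - κ * f) * ((f ^ (-(2 : ℝ) / 3) : ℝ) : ℂ))

/-- `β₋(z) = Ai(−ω(z − κf)f^{−2/3})·Ai(−(z + κf)f^{−2/3})` -/
noncomputable def betaM (κ f : ℝ) (z : ℂ) : ℂ :=
  Ai (-ωc * (z - κ * f) * ((f ^ (-(2 : ℝ) / 3) : ℝ) : ℂ)) *
    Ai (-(z + κ * f) * ((f ^ (-(2 : ℝ) / 3) : ℝ) : ℂ))

/-- The resonance determinant `D_f` of the Stark Hamiltonian
`p² + fx + η⁻¹(δ_κ + δ_{−κ})`: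
`D_f(z) = 1 + (α₊ + α₋)/(ηW) + β₊(β₋ − β₊)/(η²W²)`. -/
noncomputable def Df (κ η f : ℝ) (z : ℂ) : ℂ :=
  1 + (alphaP κ f z + alphaM κ f z) / (η * Wf f)
    + betaP κ f z * (betaM κ f z - betaP κ f z) / (η ^ 2 * (Wf f) ^ 2)

/-!
With `x = f^{1/3}` and `q = -z f^{-2/3}`, every product `α_±`, `β_±` is `Ai (ω p) Ai p'` with
`p, p' = q ± κ x`, and the only term of `x D_f(z)` that is singular in `x` carries the factor
`(β₋ - β₊) / x`. The difference `β₋ - β₊` is antisymmetric and solves Airy's equation in one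
variable, so it vanishes on the diagonal to first order, with a Wronskian as slope. Therefore
`x D_f(z)` converges as `x → 0⁺`, for `z = 0` to a nonzero multiple of `Ai(0)²`. Comparing the
Taylor series of `Ai` with that of `cosh (2/3 |q|^{3/2})` bounds `x D_f(z)` by
`exp (4/3 |q|^{3/2} + O(|q| + 1))`, and the error is absorbed by `c > 1`, since
`f^a f^{-2/3} → ∞` makes `|q|` large on all the circles considered.

The lower bound is then Cartan's: for `F` entire with `F(0) = 1`, replace the zeros `aᵢ` of `F` in
`|z| ≤ 2R` by their reflections in `|z| = 2eR`. This does not change `|F|` on that circle, so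
the maximum principle bounds both the new function and the number of zeros, and Borel–Carathéodory
bounds the new, zero-free function from below. Chebyshev's extremal property of monic polynomials
gives a radius `r` near `R` at which `∏ |r - |aᵢ||`, and with it `∏ |z - aᵢ|`, is not too small.
-/

section MinimumModulus

open Metric Polynomial
open scoped ComplexConjugate

theorem exists_pow_le_abs_eval_of_monic {Q : ℝ[X]} (hQ : Q.Monic) :
    ∃ t ∈ Set.Icc (-1 : ℝ) 1, (1 / 2) ^ Q.natDegree ≤ |Q.eval t| := by
  rcases Nat.eq_zero_or_pos Q.natDegree with h0 | hpos
  · exact ⟨0, by norm_num, by simp [hQ.natDegree_eq_zero.mp h0]⟩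
  by_contra! hlt
  have hdeg : (C (2 ^ Q.natDegree) * Q).degree ≤ (Q.natDegree : WithBot ℕ) := by
    rw [degree_C_mul (by positivity)]
    exact degree_le_natDegree
  have hle : (2 : ℝ) ^ Q.natDegree ≤ 2 ^ (Q.natDegree - 1) := by
    have hlead := Polynomial.Chebyshev.leadingCoeff_le_of_forall_abs_le_one hdeg fun x hx => by
      calc |(C (2 ^ Q.natDegree) * Q).eval x| = 2 ^ Q.natDegree * |Q.eval x| := by
            simp [abs_mul]
        _ ≤ 2 ^ Q.natDegree * (1 / 2) ^ Q.natDegree := by gcongr; exact (hlt x hx).le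
        _ = 1 := by rw [← mul_pow]; norm_num
    rwa [leadingCoeff_mul, leadingCoeff_C, hQ.leadingCoeff, mul_one] at hlead
  exact hle.not_gt (pow_lt_pow_right₀ one_lt_two (by omega))

theorem exists_pow_le_prod_abs_sub {ι : Type*} [Fintype ι] (b : ι → ℝ) (m : ℝ) {h : ℝ}
    (hh : 0 < h) :
    ∃ x ∈ Set.Icc (m - h) (m + h), (h / 2) ^ Fintype.card ι ≤ ∏ i, |x - b i| := by
  obtain ⟨t, ht, hle⟩ := exists_pow_le_abs_eval_of_monic
    (monic_prod_of_monic Finset.univ _ fun i _ => monic_X_sub_C ((b i - m) / h))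
  rw [natDegree_finsetProd_X_sub_C_eq_card, Finset.card_univ] at hle
  refine ⟨m + h * t, ⟨by nlinarith [ht.1], by nlinarith [ht.2]⟩, ?_⟩
  have hfactor (i : ι) : |m + h * t - b i| = h * |t - (b i - m) / h| := by
    rw [← abs_of_pos hh, ← abs_mul, abs_of_pos hh]
    congr 1
    field
  calc (h / 2) ^ Fintype.card ι = h ^ Fintype.card ι * (1 / 2) ^ Fintype.card ι := by
        rw [← mul_pow]; ring
    _ ≤ h ^ Fintype.card ι * |(∏ i, (X - C ((b i - m) / h))).eval t| := by gcongr
    _ = ∏ i, |m + h * t - b i| := by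
        simp [hfactor, eval_prod, Finset.abs_prod, Finset.prod_mul_distrib]

theorem exists_eqOn_mul_exp_of_ne_zero {G : ℂ → ℂ} {c : ℂ} {S : ℝ}
    (hG : DifferentiableOn ℂ G (ball c S)) (h0 : ∀ z ∈ ball c S, G z ≠ 0) :
    ∃ g : ℂ → ℂ, DifferentiableOn ℂ g (ball c S) ∧ g c = 0 ∧
      ∀ z ∈ ball c S, G z = G c * Complex.exp (g z) := by
  have hlog : DifferentiableOn ℂ (logDeriv G) (ball c S) := (hG.deriv isOpen_ball).div hG h0
  obtain ⟨g, hgc, hg⟩ := hlog.isExactOn_ball.with_val_at c 0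
  have hgd : DifferentiableOn ℂ g (ball c S) :=
    fun z hz => (hg z hz).differentiableAt.differentiableWithinAt
  refine ⟨g, hgd, hgc, fun z hz => ?_⟩
  have hlogDeriv : Set.EqOn (logDeriv G) (logDeriv fun z => Complex.exp (g z)) (ball c S) :=
    fun w hw => by simp [logDeriv_apply, (hg w hw).cexp.deriv]
  obtain ⟨k, -, hk⟩ := (logDeriv_eqOn_iff hG hgd.cexp isOpen_ball
    (convex_ball c S).isPreconnected (fun _ _ => Complex.exp_ne_zero _) h0).mp hlogDeriv
  have hkz (w : ℂ) (hw : w ∈ ball c S) : G w = k * Complex.exp (g w) := hk hw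
  rw [hkz z hz, hkz c (mem_ball_self (pos_of_mem_ball hz)), hgc, Complex.exp_zero, mul_one]

theorem exp_neg_le_norm_of_ne_zero {G : ℂ → ℂ} {S L : ℝ} (hL : 0 < L)
    (hG : DifferentiableOn ℂ G (ball 0 S)) (h0 : ∀ z ∈ ball (0 : ℂ) S, G z ≠ 0)
    (hG0 : 1 ≤ ‖G 0‖) (hGL : ∀ z ∈ ball (0 : ℂ) S, ‖G z‖ ≤ exp L) {z : ℂ} (hz : z ∈ ball 0 S) :
    exp (-(2 * L * ‖z‖ / (S - ‖z‖))) ≤ ‖G z‖ := by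
  obtain ⟨g, hg, hg0, hexp⟩ := exists_eqOn_mul_exp_of_ne_zero hG h0
  have hnorm (w : ℂ) (hw : w ∈ ball 0 S) : exp (g w).re ≤ ‖G w‖ := by
    rw [hexp w hw, norm_mul, Complex.norm_exp]
    exact le_mul_of_one_le_left (exp_pos _).le hG0
  have hre : Set.MapsTo g (ball 0 S) {w | w.re ≤ L} :=
    fun w hw => exp_le_exp.mp ((hnorm w hw).trans (hGL w hw))
  have hgz : ‖g z‖ ≤ 2 * L * ‖z‖ / (S - ‖z‖) :=
    Complex.borelCaratheodory_zero hL hg hre (pos_of_mem_ball hz) hz hg0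
  refine le_trans ?_ (hnorm z hz)
  gcongr
  linarith [neg_abs_le (g z).re, Complex.abs_re_le_norm (g z)]

variable {ι : Type*} [Fintype ι]

theorem norm_prod_le_pow_card {𝕜 : Type*} [NormedField 𝕜] {u : ι → 𝕜} {B : ℝ}
    (hu : ∀ i, ‖u i‖ ≤ B) : ‖∏ i, u i‖ ≤ B ^ Fintype.card ι := by
  rw [norm_prod, ← Finset.card_univ, ← Finset.prod_const]
  exact Finset.prod_le_prod (fun _ _ => norm_nonneg _) fun i _ => hu i

/-- The product of the reflections of the linear factors `z - a i` in the circle `‖z‖ = ρ`: on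
that circle it has the same modulus as `∏ i, (z - a i)`, and it has no zeros inside when the `a i`
lie inside. -/
noncomputable def reflectedProd (ρ : ℝ) (a : ι → ℂ) (z : ℂ) : ℂ :=
  ∏ i, ((ρ : ℂ) - conj (a i) * z / ρ)

@[fun_prop]
theorem differentiable_reflectedProd (ρ : ℝ) (a : ι → ℂ) :
    Differentiable ℂ (reflectedProd ρ a) := by
  unfold reflectedProd
  fun_prop

theorem reflectedProd_zero (ρ : ℝ) (a : ι → ℂ) :
    reflectedProd ρ a 0 = (ρ : ℂ) ^ Fintype.card ι := by
  simp [reflectedProd]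

theorem norm_conj_mul_div_le {ρ S r : ℝ} {a z : ℂ} (ha : ‖a‖ ≤ S) (hz : ‖z‖ ≤ r) (hρ : 0 < ρ) :
    ‖conj a * z / ρ‖ ≤ S * r / ρ := by
  rw [norm_div, norm_mul, Complex.norm_conj, Complex.norm_of_nonneg hρ.le]
  have := (norm_nonneg a).trans ha
  gcongr

theorem reflectedProd_ne_zero {ρ S r : ℝ} {a : ι → ℂ} (ha : ∀ i, ‖a i‖ ≤ S) (hρ : 0 < ρ)
    (hS : S * r < ρ ^ 2) {z : ℂ} (hz : ‖z‖ ≤ r) : reflectedProd ρ a z ≠ 0 := by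
  refine Finset.prod_ne_zero_iff.mpr fun i _ => sub_ne_zero.mpr fun heq => ?_
  have hle := norm_conj_mul_div_le (ha i) hz hρ
  rw [← heq, Complex.norm_of_nonneg hρ.le, le_div_iff₀ hρ] at hle
  nlinarith

theorem norm_reflectedProd_le {ρ S r : ℝ} {a : ι → ℂ} (ha : ∀ i, ‖a i‖ ≤ S) (hρ : 0 < ρ) {z : ℂ}
    (hz : ‖z‖ ≤ r) : ‖reflectedProd ρ a z‖ ≤ (ρ + S * r / ρ) ^ Fintype.card ι := by
  refine norm_prod_le_pow_card fun i => (norm_sub_le _ _).trans ?_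
  rw [Complex.norm_of_nonneg hρ.le]
  gcongr
  exact norm_conj_mul_div_le (ha i) hz hρ

theorem norm_reflectedProd_of_norm_eq {ρ : ℝ} (hρ : 0 < ρ) (a : ι → ℂ) {z : ℂ} (hz : ‖z‖ = ρ) :
    ‖reflectedProd ρ a z‖ = ‖∏ i, (z - a i)‖ := by
  have hfactor (i : ι) : (ρ : ℂ) - conj (a i) * z / ρ = z / ρ * conj (z - a i) := by
    have hzz : z * conj z = (ρ : ℂ) ^ 2 := by
      rw [Complex.mul_conj, Complex.normSq_eq_norm_sq, hz, Complex.ofReal_pow]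
    have hρ0 : (ρ : ℂ) ≠ 0 := Complex.ofReal_ne_zero.mpr hρ.ne'
    rw [map_sub]
    field_simp
    linear_combination -hzz
  rw [reflectedProd, norm_prod, norm_prod]
  refine Finset.prod_congr rfl fun i _ => ?_
  rw [hfactor, norm_mul, norm_div, hz, Complex.norm_conj, Complex.norm_of_nonneg hρ.le,
    div_self hρ.ne', one_mul]

theorem norm_reflectedProd_mul_le {g : ℂ → ℂ} (hg : Differentiable ℂ g) {a : ι → ℂ} {ρ B : ℝ}
    (hρ : 0 < ρ) (hB : ∀ z, ‖z‖ ≤ ρ → ‖(∏ i, (z - a i)) * g z‖ ≤ B) {z : ℂ} (hz : ‖z‖ ≤ ρ) :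
    ‖reflectedProd ρ a z * g z‖ ≤ B := by
  have hd : Differentiable ℂ fun z => reflectedProd ρ a z * g z := by fun_prop
  refine Complex.norm_le_of_forall_mem_frontier_norm_le (U := ball 0 ρ)
    (f := fun z => reflectedProd ρ a z * g z) isBounded_ball hd.diffContOnCl (fun w hw => ?_) ?_
  · rw [frontier_ball _ hρ.ne', mem_sphere_zero_iff_norm] at hw
    rw [norm_mul, norm_reflectedProd_of_norm_eq hρ a hw, ← norm_mul]
    exact hB w hw.le
  · rwa [closure_ball _ hρ.ne', mem_closedBall_zero_iff]

theorem norm_mul_pow_card_le {g : ℂ → ℂ} {a : ι → ℂ} {S ρ : ℝ} (hS : 0 < S) (hρ : 0 < ρ)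
    (ha : ∀ i, ‖a i‖ ≤ S) :
    (ρ / S) ^ Fintype.card ι * ‖(∏ i, (0 - a i)) * g 0‖ ≤ ‖reflectedProd ρ a 0 * g 0‖ := by
  have hprod : ‖∏ i, (0 - a i)‖ ≤ S ^ Fintype.card ι :=
    norm_prod_le_pow_card fun i => by simpa using ha i
  calc (ρ / S) ^ Fintype.card ι * ‖(∏ i, (0 - a i)) * g 0‖
      ≤ (ρ / S) ^ Fintype.card ι * (S ^ Fintype.card ι * ‖g 0‖) := by
        rw [norm_mul]; gcongr
    _ = ‖reflectedProd ρ a 0 * g 0‖ := by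
        rw [reflectedProd_zero, norm_mul, norm_pow, Complex.norm_of_nonneg hρ.le, div_pow]
        field

theorem exists_eq_prod_sub_mul_ne_zero {F : ℂ → ℂ} (hF : Differentiable ℂ F) (hF0 : F 0 ≠ 0)
    {S : ℝ} (hS : 0 < S) :
    ∃ (n : ℕ) (a : Fin n → ℂ) (g : ℂ → ℂ), Differentiable ℂ g ∧ (∀ i, ‖a i‖ ≤ S) ∧
      (∀ z, F z = (∏ i, (z - a i)) * g z) ∧ ∀ z, ‖z‖ ≤ S → g z ≠ 0 := by
  classical
  let HasFactors (n : ℕ) : Prop := ∃ (a : Fin n → ℂ) (g : ℂ → ℂ), Differentiable ℂ g ∧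
    (∀ i, ‖a i‖ ≤ S) ∧ ∀ z, F z = (∏ i, (z - a i)) * g z
  obtain ⟨B, hB⟩ := (isCompact_closedBall (0 : ℂ) (2 * S)).exists_bound_of_continuousOn
    hF.continuous.continuousOn
  have hbound (n : ℕ) (hn : HasFactors n) : n ≤ ⌈B / ‖F 0‖⌉₊ := by
    obtain ⟨a, g, hg, ha, hfac⟩ := hn
    have h2n : (2 : ℝ) ^ n * ‖F 0‖ ≤ B := by
      have hjensen := norm_mul_pow_card_le (g := g) hS (ρ := 2 * S) (by positivity) ha
      rw [mul_div_cancel_right₀ _ hS.ne', Fintype.card_fin, ← hfac 0] at hjensen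
      exact hjensen.trans (norm_reflectedProd_mul_le hg (by positivity)
        (fun z hz => hfac z ▸ hB z (mem_closedBall_zero_iff.mpr hz)) (by simp [hS.le]))
    have hn2 : (n : ℝ) ≤ 2 ^ n := mod_cast Nat.lt_two_pow_self.le
    exact_mod_cast (hn2.trans ((le_div_iff₀ (norm_pos_iff.mpr hF0)).mpr h2n)).trans (Nat.le_ceil _)
  have hmax : HasFactors (Nat.findGreatest HasFactors ⌈B / ‖F 0‖⌉₊) :=
    Nat.findGreatest_spec (Nat.zero_le _) ⟨Fin.elim0, F, hF, fun i => i.elim0, by simp⟩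
  have hlast : ¬ HasFactors (Nat.findGreatest HasFactors ⌈B / ‖F 0‖⌉₊ + 1) := fun h =>
    (Nat.le_findGreatest (hbound _ h) h).not_gt (Nat.lt_succ_self _)
  obtain ⟨a, g, hg, ha, hfac⟩ := hmax
  -- A further zero `z` of `g` could be split off through `dslope`, against maximality.
  refine ⟨_, a, g, hg, ha, hfac, fun z hz hgz => hlast ⟨Fin.cons z a, dslope g z, ?_, ?_, ?_⟩⟩
  · rw [← differentiableOn_univ] at hg ⊢
    exact (Complex.differentiableOn_dslope Filter.univ_mem).mpr hg
  · exact Fin.cases (by simpa using hz) (by simpa using ha)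
  · intro w
    have hslope : (w - z) * dslope g z w = g w := by simpa [hgz] using sub_smul_dslope g z w
    simp only [hfac w, ← hslope, Fin.prod_univ_succ, Fin.cons_zero, Fin.cons_succ]
    ring

theorem pow_mul_norm_reflectedProd_le {R r δ : ℝ} (hR : 0 < R) (hδ : 0 < δ)
    {a : ι → ℂ} (ha : ∀ i, ‖a i‖ ≤ 2 * R) (hrR : r ≤ R)
    (hr : (δ * R / 8) ^ Fintype.card ι ≤ ∏ i, |r - ‖a i‖|) {z : ℂ} (hz : ‖z‖ = r) :
    (exp (-5) * δ) ^ Fintype.card ι * ‖reflectedProd (2 * exp 1 * R) a z‖ ≤ ‖∏ i, (z - a i)‖ := by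
  have he : (2.7 : ℝ) < exp 1 := lt_trans (by norm_num) exp_one_gt_d9
  have hfactor : 2 * exp 1 * R + 2 * R * R / (2 * exp 1 * R) ≤ exp 5 * (R / 8) := by
    have hquot : 2 * R * R / (2 * exp 1 * R) ≤ R := by
      rw [div_le_iff₀ (by positivity)]; nlinarith [mul_pos hR hR]
    have hexp5 : 8 * (2 * exp 1 + 1) ≤ exp 5 := by
      have : exp 5 = exp 1 ^ 5 := by rw [← exp_nat_mul]; norm_num
      have : (2.7 : ℝ) ^ 4 ≤ exp 1 ^ 4 := by gcongr
      nlinarith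
    nlinarith
  calc (exp (-5) * δ) ^ Fintype.card ι * ‖reflectedProd (2 * exp 1 * R) a z‖
      ≤ (exp (-5) * δ) ^ Fintype.card ι * (exp 5 * (R / 8)) ^ Fintype.card ι := by
        gcongr
        exact (norm_reflectedProd_le ha (by positivity) (hz.trans_le hrR)).trans (by gcongr)
    _ = (δ * R / 8) ^ Fintype.card ι := by
        have hexp : exp (-5) * exp 5 = 1 := by rw [← exp_add]; norm_num
        rw [← mul_pow]
        congr 1
        linear_combination (δ * R / 8) * hexp
    _ ≤ ∏ i, |r - ‖a i‖| := hr
    _ ≤ ‖∏ i, (z - a i)‖ := by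
        rw [norm_prod, ← hz]
        gcongr with i
        exact abs_norm_sub_norm_le z (a i)

theorem exp_neg_two_mul_le_norm_reflectedProd_mul {g : ℂ → ℂ} (hg : Differentiable ℂ g)
    {a : ι → ℂ} {R L : ℝ} (hR : 0 < R) (hL : 0 < L) (ha : ∀ i, ‖a i‖ ≤ 2 * R)
    (hg0 : ∀ z, ‖z‖ ≤ 2 * R → g z ≠ 0) (hF0 : 1 ≤ ‖(∏ i, (0 - a i)) * g 0‖)
    (hB : ∀ z, ‖z‖ ≤ 2 * exp 1 * R → ‖(∏ i, (z - a i)) * g z‖ ≤ exp L) {z : ℂ} (hz : ‖z‖ ≤ R) :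
    exp (-(2 * L)) ≤ ‖reflectedProd (2 * exp 1 * R) a z * g z‖ := by
  have he : 1 < exp 1 := one_lt_exp_iff.mpr one_pos
  have hρ : 2 * R < 2 * exp 1 * R := by nlinarith
  have hnorm {w : ℂ} (hw : w ∈ ball 0 (2 * R)) : ‖w‖ ≤ 2 * R := (mem_ball_zero_iff.mp hw).le
  have hne (w : ℂ) (hw : w ∈ ball 0 (2 * R)) : reflectedProd (2 * exp 1 * R) a w * g w ≠ 0 :=
    mul_ne_zero (reflectedProd_ne_zero ha (by positivity) (by nlinarith) (hnorm hw))
      (hg0 w (hnorm hw))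
  have hzero : 1 ≤ ‖reflectedProd (2 * exp 1 * R) a 0 * g 0‖ := by
    refine le_trans ?_ (norm_mul_pow_card_le (by positivity) (by positivity) ha)
    refine one_le_mul_of_one_le_of_one_le (one_le_pow₀ ?_) hF0
    exact (one_le_div (by positivity)).mpr hρ.le
  refine le_trans (exp_le_exp.mpr (neg_le_neg ?_))
    (exp_neg_le_norm_of_ne_zero (G := fun z => reflectedProd (2 * exp 1 * R) a z * g z) hL
      (by fun_prop) hne hzero
      (fun w hw => norm_reflectedProd_mul_le hg (by positivity) hB ((hnorm hw).trans hρ.le))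
      (mem_ball_zero_iff.mpr (hz.trans_lt (by linarith))))
  rw [div_le_iff₀ (by linarith)]
  gcongr
  linarith

theorem card_le_of_norm_prod_sub_mul_le_exp {g : ℂ → ℂ} (hg : Differentiable ℂ g) {a : ι → ℂ}
    {S L : ℝ} (hS : 0 < S) (ha : ∀ i, ‖a i‖ ≤ S) (hF0 : 1 ≤ ‖(∏ i, (0 - a i)) * g 0‖)
    (hB : ∀ z, ‖z‖ ≤ exp 1 * S → ‖(∏ i, (z - a i)) * g z‖ ≤ exp L) :
    (Fintype.card ι : ℝ) ≤ L := by
  rw [← exp_le_exp]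
  calc exp (Fintype.card ι) = (exp 1 * S / S) ^ Fintype.card ι := by
        rw [mul_div_cancel_right₀ _ hS.ne', ← exp_nat_mul, mul_one]
    _ ≤ (exp 1 * S / S) ^ Fintype.card ι * ‖(∏ i, (0 - a i)) * g 0‖ :=
        le_mul_of_one_le_right (by positivity) hF0
    _ ≤ ‖reflectedProd (exp 1 * S) a 0 * g 0‖ := norm_mul_pow_card_le hS (by positivity) ha
    _ ≤ exp L := norm_reflectedProd_mul_le hg (by positivity) hB (by rw [norm_zero]; positivity)

theorem exists_circle_rpow_le_norm {F : ℂ → ℂ} (hF : Differentiable ℂ F) (hF0 : 1 ≤ ‖F 0‖)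
    {R L δ : ℝ} (hR : 0 < R) (hL : 0 < L) (hδ0 : 0 < δ) (hδ1 : δ < 1)
    (hB : ∀ z, ‖z‖ ≤ 2 * exp 1 * R → ‖F z‖ ≤ exp L) :
    ∃ r, (1 - δ) * R < r ∧ r < R ∧ ∀ z : ℂ, ‖z‖ = r → (exp (-7) * δ) ^ L ≤ ‖F z‖ := by
  obtain ⟨n, a, g, hg, ha, hfac, hg0⟩ := exists_eq_prod_sub_mul_ne_zero hF
    (norm_pos_iff.mp (one_pos.trans_le hF0)) (S := 2 * R) (by positivity)
  obtain rfl : F = fun z => (∏ i, (z - a i)) * g z := funext hfac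
  obtain ⟨r, hr, hprod⟩ := exists_pow_le_prod_abs_sub (fun i => ‖a i‖) (R * (1 - δ / 2))
    (h := δ * R / 4) (by positivity)
  have hδR : 0 < δ * R := by positivity
  refine ⟨r, by linarith [hr.1], by linarith [hr.2], fun z hz => ?_⟩
  have hrR : r ≤ R := by linarith [hr.2]
  have hn : (n : ℝ) ≤ L := by
    simpa using card_le_of_norm_prod_sub_mul_le_exp hg (by positivity) ha hF0
      fun z hz => hB z (hz.trans_eq (by ring))
  have hreflected := exp_neg_two_mul_le_norm_reflectedProd_mul hg hR hL ha hg0 hF0 hB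
    (hz.trans_le hrR)
  have hcompare := pow_mul_norm_reflectedProd_le hR hδ0 ha hrR
    (hprod.trans' (by rw [div_div]; norm_num)) hz
  rw [Fintype.card_fin] at hcompare
  have hq : exp (-5) * δ ≤ 1 := mul_le_one₀ (exp_le_one_iff.mpr (by norm_num)) hδ0.le hδ1.le
  calc (exp (-7) * δ) ^ L = (exp (-5) * δ) ^ L * exp (-(2 * L)) := by
        rw [mul_rpow (exp_pos _).le hδ0.le, mul_rpow (exp_pos _).le hδ0.le, ← exp_mul, ← exp_mul,
          mul_right_comm, ← exp_add]
        ring_nf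
    _ ≤ (exp (-5) * δ) ^ n * ‖reflectedProd (2 * exp 1 * R) a z * g z‖ := by
        gcongr
        rw [← rpow_natCast]
        exact rpow_le_rpow_of_exponent_ge (by positivity) hq hn
    _ = (exp (-5) * δ) ^ n * ‖reflectedProd (2 * exp 1 * R) a z‖ * ‖g z‖ := by
        rw [norm_mul, ← mul_assoc]
    _ ≤ ‖∏ i, (z - a i)‖ * ‖g z‖ := by gcongr
    _ = ‖(∏ i, (z - a i)) * g z‖ := (norm_mul _ _).symm

end MinimumModulus

section PowerSeries

theorem summable_norm_mul_pow {c : ℕ → ℂ} (hc : ∀ z, Summable fun k => c k * z ^ k) {r : ℝ}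
    (hr : 0 ≤ r) : Summable fun k => ‖c k‖ * r ^ k := by
  simpa [abs_of_nonneg hr] using (hc r).norm

theorem norm_mul_pow_le_of_mem_ball {c : ℕ → ℂ} {r : ℝ} (k : ℕ) (z : ℂ)
    (hz : z ∈ Metric.ball 0 r) : ‖c k * z ^ k‖ ≤ ‖c k‖ * r ^ k := by
  rw [norm_mul, norm_pow]
  gcongr
  exact (mem_ball_zero_iff.mp hz).le

theorem differentiable_tsum_mul_pow {c : ℕ → ℂ} (hc : ∀ z, Summable fun k => c k * z ^ k) :
    Differentiable ℂ fun z => ∑' k, c k * z ^ k := fun z =>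
  (Complex.differentiableOn_tsum_of_summable_norm
    (summable_norm_mul_pow hc (r := ‖z‖ + 1) (by positivity))
    (fun k => by fun_prop) Metric.isOpen_ball norm_mul_pow_le_of_mem_ball).differentiableAt
    (Metric.isOpen_ball.mem_nhds (by simp))

theorem hasSum_deriv_tsum_mul_pow {c : ℕ → ℂ} (hc : ∀ z, Summable fun k => c k * z ^ k) (z : ℂ) :
    HasSum (fun k : ℕ => (k + 1) * c (k + 1) * z ^ k) (deriv (fun w => ∑' k, c k * w ^ k) z) := by
  have hsum := Complex.hasSum_deriv_of_summable_norm (F := fun k w => c k * w ^ k)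
    (summable_norm_mul_pow hc (r := ‖z‖ + 1) (by positivity))
    (fun k => by fun_prop) Metric.isOpen_ball norm_mul_pow_le_of_mem_ball
    (z := z) (by simp)
  rw [← hasSum_nat_add_iff' 1] at hsum
  convert! hsum using 1
  · funext k
    simp only [Nat.add_sub_cancel, deriv_const_mul_field', deriv_pow_field, Nat.cast_add,
      Nat.cast_one]
    ring
  · simp

end PowerSeries

section AiryFunction

-- The majorant is the Taylor coefficient of `cosh (2/3 * r ^ (3/2))`, with `r ^ (3 * k)` left out.
theorem norm_airyCoeff_three_mul_add_le (j k : ℕ) :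
    ‖airyCoeff (3 * k + j)‖ ≤ ‖airyCoeff j‖ * ((2 / 3) ^ (2 * k) / (2 * k).factorial) := by
  induction k with
  | zero => simp
  | succ k ih =>
    have hrec : airyCoeff (3 * (k + 1) + j) =
        airyCoeff (3 * k + j) / (((3 * k + j + 3) * (3 * k + j + 2) : ℝ) : ℂ) := by
      rw [show 3 * (k + 1) + j = 3 * k + j + 3 by ring, airyCoeff]
      push_cast
      rfl
    have hfact : ((2 * (k + 1)).factorial : ℝ) =
        (2 * k + 2) * (2 * k + 1) * (2 * k).factorial := by
      rw [show 2 * (k + 1) = 2 * k + 1 + 1 by ring, Nat.factorial_succ, Nat.factorial_succ]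
      push_cast
      ring
    have hratio : ((2 * k + 2) * (2 * k + 1) : ℝ) ≤
        (2 / 3) ^ 2 * ((3 * k + j + 3) * (3 * k + j + 2)) := by
      nlinarith [Nat.cast_nonneg (α := ℝ) k, Nat.cast_nonneg (α := ℝ) j]
    calc ‖airyCoeff (3 * (k + 1) + j)‖
        = ‖airyCoeff (3 * k + j)‖ / ((3 * k + j + 3) * (3 * k + j + 2)) := by
          rw [hrec, norm_div, Complex.norm_of_nonneg (by positivity)]
      _ ≤ ‖airyCoeff j‖ * ((2 / 3) ^ (2 * k) / (2 * k).factorial) /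
            ((2 * k + 2) * (2 * k + 1) / (2 / 3) ^ 2) := by
          gcongr
          rwa [div_le_iff₀' (by positivity)]
      _ = ‖airyCoeff j‖ * ((2 / 3) ^ (2 * (k + 1)) / (2 * (k + 1)).factorial) := by
          rw [hfact, mul_add_one 2 k, pow_add]
          field

theorem two_thirds_mul_rpow_pow {r : ℝ} (hr : 0 ≤ r) (k : ℕ) :
    (2 / 3 * r ^ (3 / 2 : ℝ)) ^ (2 * k) = (2 / 3) ^ (2 * k) * r ^ (3 * k) := by
  rw [mul_pow, ← rpow_mul_natCast hr, ← rpow_natCast r]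
  congr 2
  push_cast
  ring

theorem sum_norm_airyCoeff_mul_pow_three_mul_le {r : ℝ} (hr : 0 ≤ r) (n : ℕ) :
    ∑ k ∈ Finset.range (3 * n), ‖airyCoeff k‖ * r ^ k ≤
      (‖airyCoeff 0‖ + ‖airyCoeff 1‖ * r) *
        ∑ k ∈ Finset.range n, (2 / 3 * r ^ (3 / 2 : ℝ)) ^ (2 * k) / (2 * k).factorial := by
  induction n with
  | zero => simp
  | succ n ih =>
    have hterm (j : ℕ) : ‖airyCoeff (3 * n + j)‖ * r ^ (3 * n + j) ≤
        ‖airyCoeff j‖ * r ^ j * ((2 / 3 * r ^ (3 / 2 : ℝ)) ^ (2 * n) / (2 * n).factorial) := by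
      calc _ ≤ ‖airyCoeff j‖ * ((2 / 3) ^ (2 * n) / (2 * n).factorial) * r ^ (3 * n + j) := by
            gcongr
            exact norm_airyCoeff_three_mul_add_le j n
        _ = _ := by rw [two_thirds_mul_rpow_pow hr, pow_add]; ring
    have h2 : airyCoeff 2 = 0 := rfl
    calc ∑ k ∈ Finset.range (3 * (n + 1)), ‖airyCoeff k‖ * r ^ k
        = ∑ k ∈ Finset.range (3 * n), ‖airyCoeff k‖ * r ^ k +
            ∑ j ∈ Finset.range 3, ‖airyCoeff (3 * n + j)‖ * r ^ (3 * n + j) :=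
          Finset.sum_range_add _ _ _
      _ ≤ _ := add_le_add ih (Finset.sum_le_sum fun j _ => hterm j)
      _ = _ := by
          simp only [Finset.sum_range_succ, Finset.sum_range_zero, h2, norm_zero]
          ring

theorem sum_norm_airyCoeff_mul_pow_le {r : ℝ} (hr : 0 ≤ r) (n : ℕ) :
    ∑ k ∈ Finset.range n, ‖airyCoeff k‖ * r ^ k ≤
      (‖airyCoeff 0‖ + ‖airyCoeff 1‖ * r) * cosh (2 / 3 * r ^ (3 / 2 : ℝ)) :=
  calc _ ≤ ∑ k ∈ Finset.range (3 * n), ‖airyCoeff k‖ * r ^ k :=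
        Finset.sum_le_sum_of_subset_of_nonneg (Finset.range_mono (by omega))
          fun k _ _ => by positivity
    _ ≤ _ := sum_norm_airyCoeff_mul_pow_three_mul_le hr n
    _ ≤ _ := by
        gcongr
        exact sum_le_hasSum _ (fun k _ => by positivity) (hasSum_cosh _)

theorem summable_airyCoeff_mul_pow (z : ℂ) : Summable fun k => airyCoeff k * z ^ k :=
  .of_norm <| by
    simpa using summable_of_sum_range_le (fun _ => by positivity)
      (sum_norm_airyCoeff_mul_pow_le (norm_nonneg z))

theorem norm_Ai_le (z : ℂ) :
    ‖Ai z‖ ≤ (‖airyCoeff 0‖ + ‖airyCoeff 1‖ * ‖z‖) * cosh (2 / 3 * ‖z‖ ^ (3 / 2 : ℝ)) :=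
  (norm_tsum_le_tsum_norm (summable_airyCoeff_mul_pow z).norm).trans <|
    tsum_le_of_sum_range_le (fun _ => norm_nonneg _) fun n => by
      simpa using sum_norm_airyCoeff_mul_pow_le (norm_nonneg z) n

theorem norm_Ai_le_exp {z : ℂ} {m : ℝ} (hz : ‖z‖ ≤ m) :
    ‖Ai z‖ ≤ (‖airyCoeff 0‖ + ‖airyCoeff 1‖) * exp (m + 2 / 3 * m ^ (3 / 2 : ℝ)) := by
  have hm : 0 ≤ m := (norm_nonneg z).trans hz
  have hlin : ‖airyCoeff 0‖ + ‖airyCoeff 1‖ * ‖z‖ ≤ (‖airyCoeff 0‖ + ‖airyCoeff 1‖) * exp m := by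
    have : ‖z‖ ≤ exp m := by linarith [add_one_le_exp m]
    nlinarith [norm_nonneg (airyCoeff 0), norm_nonneg (airyCoeff 1), one_le_exp hm]
  have hcosh : cosh (2 / 3 * ‖z‖ ^ (3 / 2 : ℝ)) ≤ exp (2 / 3 * m ^ (3 / 2 : ℝ)) := by
    refine le_trans ?_ (exp_le_exp.mpr (by gcongr : 2 / 3 * ‖z‖ ^ (3 / 2 : ℝ) ≤ _))
    rw [← cosh_add_sinh]
    exact le_add_of_nonneg_right (sinh_nonneg_iff.mpr (by positivity))
  rw [exp_add, ← mul_assoc]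
  exact (norm_Ai_le z).trans (by gcongr)

/-- Entire solutions of Airy's differential equation `u'' = z u`. -/
structure IsAirySolution (u : ℂ → ℂ) : Prop where
  differentiable : Differentiable ℂ u
  deriv_deriv : ∀ z, deriv (deriv u) z = z * u z

namespace IsAirySolution

variable {u v : ℂ → ℂ}

theorem hasDerivAt (hu : IsAirySolution u) (z : ℂ) : HasDerivAt u (deriv u z) z :=
  (hu.differentiable z).hasDerivAt

theorem hasDerivAt_deriv (hu : IsAirySolution u) (z : ℂ) : HasDerivAt (deriv u) (z * u z) z :=
  hu.deriv_deriv z ▸ (hu.differentiable.deriv z).hasDerivAt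

theorem const_mul (hu : IsAirySolution u) (k : ℂ) : IsAirySolution fun z => k * u z where
  differentiable := hu.differentiable.const_mul k
  deriv_deriv z := by
    simp only [deriv_const_mul_field', hu.deriv_deriv]
    ring

theorem sub (hu : IsAirySolution u) (hv : IsAirySolution v) :
    IsAirySolution fun z => u z - v z where
  differentiable := hu.differentiable.sub hv.differentiable
  deriv_deriv z := by
    have hderiv : deriv (fun z => u z - v z) = fun z => deriv u z - deriv v z :=
      funext fun z => ((hu.hasDerivAt z).sub (hv.hasDerivAt z)).deriv
    rw [hderiv, ((hu.hasDerivAt_deriv z).fun_sub (hv.hasDerivAt_deriv z)).deriv, mul_sub]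

theorem comp_mul_left (hu : IsAirySolution u) {ζ : ℂ} (hζ : ζ ^ 3 = 1) :
    IsAirySolution fun z => u (ζ * z) where
  differentiable := hu.differentiable.comp (differentiable_id.const_mul ζ)
  deriv_deriv z := by
    have hderiv : deriv (fun z => u (ζ * z)) = fun z => ζ * deriv u (ζ * z) :=
      funext fun z => by simpa using deriv_comp_mul_left ζ u z
    rw [hderiv, deriv_const_mul_field, deriv_comp_mul_left, hu.deriv_deriv, smul_eq_mul]
    linear_combination z * u (ζ * z) * hζ

theorem wronskian_eq (hu : IsAirySolution u) (hv : IsAirySolution v) (z : ℂ) :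
    u z * deriv v z - v z * deriv u z = u 0 * deriv v 0 - v 0 * deriv u 0 := by
  have hconst (w : ℂ) : HasDerivAt (fun z => u z * deriv v z - v z * deriv u z) 0 w := by
    convert! ((hu.hasDerivAt w).mul (hv.hasDerivAt_deriv w)).sub
      ((hv.hasDerivAt w).mul (hu.hasDerivAt_deriv w)) using 1
    ring
  exact is_const_of_deriv_eq_zero (fun w => (hconst w).differentiableAt)
    (fun w => (hconst w).deriv) z 0

theorem norm_prodMk_deriv_le (hu : IsAirySolution u) {p q : ℂ} {m : ℝ} (hp : ‖p‖ ≤ m)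
    (hq : ‖q‖ ≤ m) :
    ‖(u p, deriv u p)‖ ≤ ‖(u q, deriv u q)‖ * exp ((1 + m) * ‖p - q‖) := by
  have hm : 0 ≤ m := (norm_nonneg p).trans hp
  let γ (t : ℝ) : ℂ := q + t * (p - q)
  have hγm (t : ℝ) (ht : t ∈ Set.Ico (0 : ℝ) 1) : ‖γ t‖ ≤ m := by
    have hmem := (convex_closedBall (0 : ℂ) m).add_smul_sub_mem
      (mem_closedBall_zero_iff.mpr hq) (mem_closedBall_zero_iff.mpr hp) (Set.Ico_subset_Icc_self ht)
    simpa [γ] using hmem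
  have hγ (t : ℝ) : HasDerivAt γ (p - q) t := by
    simpa [γ] using (Complex.ofRealCLM.hasDerivAt (x := t)).mul_const (p - q)
  let y (t : ℝ) : ℂ × ℂ := (u (γ t), deriv u (γ t))
  let y' (t : ℝ) : ℂ × ℂ := (deriv u (γ t) * (p - q), γ t * u (γ t) * (p - q))
  have hy (t : ℝ) : HasDerivAt y (y' t) t :=
    ((hu.hasDerivAt _).comp t (hγ t)).prodMk ((hu.hasDerivAt_deriv _).comp t (hγ t))
  have hy' (t : ℝ) (ht : t ∈ Set.Ico (0 : ℝ) 1) : ‖y' t‖ ≤ (1 + m) * ‖p - q‖ * ‖y t‖ + 0 := by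
    have hfst : ‖u (γ t)‖ ≤ ‖y t‖ := norm_fst_le (y t)
    have hsnd : ‖deriv u (γ t)‖ ≤ ‖y t‖ := norm_snd_le (y t)
    rw [add_zero, mul_right_comm]
    refine norm_prod_le_iff.mpr ⟨?_, ?_⟩
    · rw [norm_mul]
      gcongr
      exact hsnd.trans (le_mul_of_one_le_left (norm_nonneg _) (by linarith))
    · rw [norm_mul, norm_mul]
      gcongr
      linarith [hγm t ht]
  have hgronwall := norm_le_gronwallBound_of_norm_deriv_right_le
    (continuous_iff_continuousAt.mpr fun t => (hy t).continuousAt).continuousOn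
    (fun t _ => (hy t).hasDerivWithinAt) le_rfl hy' 1 (Set.right_mem_Icc.mpr zero_le_one)
  simpa [gronwallBound_ε0, y, γ] using hgronwall

theorem norm_le_of_apply_eq_zero (hu : IsAirySolution u) {p q : ℂ} {m : ℝ} (hp : ‖p‖ ≤ m)
    (hq : ‖q‖ ≤ m) (huq : u q = 0) :
    ‖u p‖ ≤ ‖deriv u q‖ * exp ((1 + m) * ‖p - q‖) * ‖p - q‖ := by
  have hm : 0 ≤ m := (norm_nonneg p).trans hp
  have hderiv (w : ℂ) (hw : w ∈ Metric.closedBall 0 m ∩ Metric.closedBall q ‖p - q‖) :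
      ‖deriv u w‖ ≤ ‖deriv u q‖ * exp ((1 + m) * ‖p - q‖) := by
    calc ‖deriv u w‖ ≤ ‖(u w, deriv u w)‖ := norm_snd_le (u w, deriv u w)
      _ ≤ ‖(u q, deriv u q)‖ * exp ((1 + m) * ‖w - q‖) :=
          hu.norm_prodMk_deriv_le (mem_closedBall_zero_iff.mp hw.1) hq
      _ ≤ ‖deriv u q‖ * exp ((1 + m) * ‖p - q‖) := by
          rw [huq, Prod.norm_mk, norm_zero, max_eq_right (norm_nonneg _)]
          gcongr
          exact mem_closedBall_iff_norm.mp hw.2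
  simpa [huq] using ((convex_closedBall 0 m).inter
    (convex_closedBall q ‖p - q‖)).norm_image_sub_le_of_norm_deriv_le
      (fun w _ => hu.differentiable w) hderiv
      ⟨mem_closedBall_zero_iff.mpr hq, Metric.mem_closedBall_self (norm_nonneg _)⟩
      ⟨mem_closedBall_zero_iff.mpr hp, mem_closedBall_iff_norm.mpr le_rfl⟩

end IsAirySolution

theorem hasSum_deriv_Ai (z : ℂ) :
    HasSum (fun k : ℕ => (k + 1) * airyCoeff (k + 1) * z ^ k) (deriv Ai z) :=
  hasSum_deriv_tsum_mul_pow summable_airyCoeff_mul_pow z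

theorem isAirySolution_Ai : IsAirySolution Ai where
  differentiable := differentiable_tsum_mul_pow summable_airyCoeff_mul_pow
  deriv_deriv z := by
    have hderiv : deriv Ai = fun z => ∑' k : ℕ, (k + 1) * airyCoeff (k + 1) * z ^ k :=
      funext fun w => (hasSum_deriv_Ai w).tsum_eq.symm
    have hsum := hasSum_deriv_tsum_mul_pow (fun w => (hasSum_deriv_Ai w).summable) z
    rw [← hderiv, ← hasSum_nat_add_iff' 1] at hsum
    refine (sub_eq_self.mpr ?_).symm.trans (hsum.unique ?_)
    · have h2 : airyCoeff 2 = 0 := rfl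
      simp [h2]
    · convert! (summable_airyCoeff_mul_pow z).hasSum.mul_left z using 2 with k
      have h2 : (k : ℂ) + 2 ≠ 0 := mod_cast (k + 1).succ_ne_zero
      have h3 : (k : ℂ) + 3 ≠ 0 := mod_cast (k + 2).succ_ne_zero
      rw [airyCoeff]
      push_cast
      field

theorem Ai_zero : Ai 0 = airyCoeff 0 :=
  (hasSum_single 0 fun k hk => by simp [hk]).tsum_eq.trans (by simp)

theorem deriv_Ai_zero : deriv Ai 0 = airyCoeff 1 := by
  have hsum := hasSum_single (f := fun k : ℕ => (k + 1) * airyCoeff (k + 1) * (0 : ℂ) ^ k) 0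
    fun k hk => by simp [hk]
  simpa using (hasSum_deriv_Ai 0).unique hsum

theorem Ai_zero_ne_zero : Ai 0 ≠ 0 := by
  rw [Ai_zero, airyCoeff]
  exact div_ne_zero (by simp) (Complex.Gamma_ne_zero_of_re_pos (by norm_num))

end AiryFunction

section AiryProduct

theorem airyCoeff_zero_mul_one : airyCoeff 0 * airyCoeff 1 = -((1 / (2 * π * √3) : ℝ) : ℂ) := by
  have hGamma : Complex.Gamma (2 / 3) * Complex.Gamma (1 / 3) = ((2 * π / √3 : ℝ) : ℂ) := by
    have hrefl := Real.Gamma_mul_Gamma_one_sub (2 / 3)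
    rw [show π * (2 / 3) = π - π / 3 by ring, sin_pi_sub, sin_pi_div_three,
      show (1 : ℝ) - 2 / 3 = 1 / 3 by norm_num, div_div_eq_mul_div, mul_comm π] at hrefl
    rw [← hrefl]
    push_cast [← Complex.Gamma_ofReal]
    rfl
  have hpow : (3 : ℂ) ^ (-(2 : ℂ) / 3) * 3 ^ (-(1 : ℂ) / 3) = 1 / 3 := by
    rw [← Complex.cpow_add _ _ (by norm_num), show -(2 : ℂ) / 3 + -1 / 3 = -1 by norm_num,
      Complex.cpow_neg_one, one_div]
  have hsqrt : (√3 : ℂ) ^ 2 = 3 := mod_cast sq_sqrt (by norm_num : (0 : ℝ) ≤ 3)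
  have hsqrt0 : (√3 : ℂ) ≠ 0 := by simp
  rw [airyCoeff, airyCoeff, mul_neg, div_mul_div_comm, hGamma, hpow]
  push_cast
  field_simp
  rw [hsqrt]

theorem norm_ωc : ‖ωc‖ = 1 := by
  rw [ωc, show 2 * (π : ℂ) * Complex.I / 3 = ((2 * π / 3 : ℝ) : ℂ) * Complex.I by push_cast; ring]
  exact Complex.norm_exp_ofReal_mul_I _

theorem ωc_pow_three : ωc ^ 3 = 1 := by
  rw [ωc, ← Complex.exp_nat_mul, ← Complex.exp_two_pi_mul_I]
  congr 1
  push_cast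
  ring

theorem ωc_sub_one : ωc - 1 = -(√3 : ℂ) * Complex.exp (-π * Complex.I / 6) := by
  have hsqrt : √3 * √3 = 3 := mul_self_sqrt (by norm_num)
  have hω : ωc = Complex.exp ((π - π / 3 : ℝ) * Complex.I) := by
    rw [ωc]; push_cast; ring_nf
  have hphase : Complex.exp (-π * Complex.I / 6) = Complex.exp ((-(π / 6) : ℝ) * Complex.I) := by
    push_cast; ring_nf
  rw [hω, hphase, Complex.exp_ofReal_mul_I, Complex.exp_ofReal_mul_I, cos_pi_sub, sin_pi_sub,
    cos_pi_div_three, sin_pi_div_three, cos_neg, sin_neg, cos_pi_div_six, sin_pi_div_six]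
  apply Complex.ext <;> simp <;> linarith

/-- The Wronskian of `Ai` and `z ↦ Ai (ω z)`; the paper's `W` is `f^{1/3}` times this constant. -/
noncomputable def airyWronskian : ℂ := Complex.exp (-π * Complex.I / 6) / (2 * π)

theorem norm_airyWronskian : ‖airyWronskian‖ = 1 / (2 * π) := by
  have hphase : -(π : ℂ) * Complex.I / 6 = ((-(π / 6) : ℝ) : ℂ) * Complex.I := by push_cast; ring
  rw [airyWronskian, hphase, norm_div, Complex.norm_exp_ofReal_mul_I, norm_mul,
    Complex.norm_of_nonneg pi_pos.le, Complex.norm_ofNat]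

theorem airyWronskian_ne_zero : airyWronskian ≠ 0 :=
  norm_pos_iff.mp (norm_airyWronskian ▸ by positivity)

theorem isAirySolution_Ai_ωc_mul : IsAirySolution fun z => Ai (ωc * z) :=
  isAirySolution_Ai.comp_mul_left ωc_pow_three

theorem deriv_Ai_ωc_mul (z : ℂ) : deriv (fun z => Ai (ωc * z)) z = ωc * deriv Ai (ωc * z) := by
  simpa using deriv_comp_mul_left ωc Ai z

theorem wronskian_Ai_Ai_ωc_mul (z : ℂ) :
    Ai z * deriv (fun z => Ai (ωc * z)) z - Ai (ωc * z) * deriv Ai z = airyWronskian := by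
  have hsqrt0 : (√3 : ℂ) ≠ 0 := by simp
  calc _ = (ωc - 1) * (airyCoeff 0 * airyCoeff 1) := by
        rw [isAirySolution_Ai.wronskian_eq isAirySolution_Ai_ωc_mul, deriv_Ai_ωc_mul, mul_zero,
          Ai_zero, deriv_Ai_zero]
        ring
    _ = airyWronskian := by
        rw [ωc_sub_one, airyCoeff_zero_mul_one, airyWronskian]
        push_cast
        field

/-- The product `Ai (ω p) * Ai q`: all of the paper's `α_±` and `β_±` are of this form. -/
noncomputable def airyProd (p q : ℂ) : ℂ := Ai (ωc * p) * Ai q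

/-- The antisymmetrization of `airyProd`: the solution of Airy's equation in `p` that vanishes at
`p = q` with slope `airyWronskian`. -/
noncomputable def airyCross (p q : ℂ) : ℂ := airyProd p q - airyProd q p

theorem norm_airyProd_le {p q : ℂ} {m : ℝ} (hp : ‖p‖ ≤ m) (hq : ‖q‖ ≤ m) :
    ‖airyProd p q‖ ≤
      (‖airyCoeff 0‖ + ‖airyCoeff 1‖) ^ 2 * exp (2 * m + 4 / 3 * m ^ (3 / 2 : ℝ)) := by
  have hωp : ‖ωc * p‖ ≤ m := by rwa [norm_mul, norm_ωc, one_mul]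
  calc ‖airyProd p q‖ ≤ _ :=
        (norm_mul_le _ _).trans (mul_le_mul (norm_Ai_le_exp hωp) (norm_Ai_le_exp hq)
          (norm_nonneg _) (by positivity))
    _ = _ := by rw [mul_mul_mul_comm, ← sq, ← exp_add]; ring_nf

theorem isAirySolution_airyCross (q : ℂ) : IsAirySolution fun p => airyCross p q := by
  simpa only [airyCross, airyProd, mul_comm _ (Ai q)] using
    (isAirySolution_Ai_ωc_mul.const_mul (Ai q)).sub (isAirySolution_Ai.const_mul (Ai (ωc * q)))

theorem deriv_airyCross_self (q : ℂ) : deriv (fun p => airyCross p q) q = airyWronskian := by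
  rw [← wronskian_Ai_Ai_ωc_mul q, mul_comm (Ai q)]
  exact (((isAirySolution_Ai_ωc_mul.hasDerivAt q).mul_const (Ai q)).sub
    ((isAirySolution_Ai.hasDerivAt q).const_mul (Ai (ωc * q)))).deriv

theorem norm_airyCross_le {p q : ℂ} {m : ℝ} (hp : ‖p‖ ≤ m) (hq : ‖q‖ ≤ m) :
    ‖airyCross p q‖ ≤ 1 / (2 * π) * exp ((1 + m) * ‖p - q‖) * ‖p - q‖ := by
  have hle := (isAirySolution_airyCross q).norm_le_of_apply_eq_zero hp hq (sub_self _)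
  rwa [deriv_airyCross_self, norm_airyWronskian] at hle

theorem hasDerivAt_airyCross_add_sub (q : ℂ) :
    HasDerivAt (fun h => airyCross (q + h) (q - h)) (2 * airyWronskian) 0 := by
  have hωadd : HasDerivAt (fun h => Ai (ωc * (q + h))) (deriv (fun z => Ai (ωc * z)) q) 0 :=
    .comp_const_add q 0 (by rw [add_zero]; exact isAirySolution_Ai_ωc_mul.hasDerivAt q)
  have hωsub : HasDerivAt (fun h => Ai (ωc * (q - h))) (-deriv (fun z => Ai (ωc * z)) q) 0 :=
    .comp_const_sub q 0 (by rw [sub_zero]; exact isAirySolution_Ai_ωc_mul.hasDerivAt q)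
  have hadd : HasDerivAt (fun h => Ai (q + h)) (deriv Ai q) 0 :=
    .comp_const_add q 0 (by rw [add_zero]; exact isAirySolution_Ai.hasDerivAt q)
  have hsub : HasDerivAt (fun h => Ai (q - h)) (-deriv Ai q) 0 :=
    .comp_const_sub q 0 (by rw [sub_zero]; exact isAirySolution_Ai.hasDerivAt q)
  convert! (hωadd.mul hsub).sub (hωsub.mul hadd) using 1
  rw [← wronskian_Ai_Ai_ωc_mul q]
  simp only [add_zero, sub_zero]
  ring

end AiryProduct

section ResonanceDeterminant

open Filter Topology

/-- The resonance determinant in Airy coordinates: for `x = f^{1/3}` and `q = -z f^{-2/3}` it is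
`x * Df κ η f z`. Unlike `Df` itself it has a limit as `x → 0⁺`. -/
noncomputable def rescaledDet (κ η x : ℝ) (q : ℂ) : ℂ :=
  x + (airyProd (q + κ * x) (q + κ * x) + airyProd (q - κ * x) (q - κ * x)) / (η * airyWronskian)
    + airyProd (q - κ * x) (q + κ * x) * (airyCross (q + κ * x) (q - κ * x) / x)
      / (η ^ 2 * airyWronskian ^ 2)

theorem differentiable_Df (κ η f : ℝ) : Differentiable ℂ (Df κ η f) := by
  have hAi := isAirySolution_Ai.differentiable
  unfold Df alphaP alphaM betaP betaM
  fun_prop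

theorem mul_Df_eq_rescaledDet (κ η : ℝ) {f : ℝ} (hf : 0 < f) (z : ℂ) :
    ((f ^ (1 / 3 : ℝ) : ℝ) : ℂ) * Df κ η f z =
      rescaledDet κ η (f ^ (1 / 3 : ℝ)) (-z * ((f ^ (-2 / 3 : ℝ) : ℝ) : ℂ)) := by
  have hfs : f * f ^ (-2 / 3 : ℝ) = f ^ (1 / 3 : ℝ) := by
    rw [← rpow_one_add' hf.le (by norm_num)]
    norm_num
  have hW : Wf f = ((f ^ (1 / 3 : ℝ) : ℝ) : ℂ) * airyWronskian := mul_div_assoc _ _ _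
  have hx : ((f ^ (1 / 3 : ℝ) : ℝ) : ℂ) ≠ 0 := mod_cast (rpow_pos_of_pos hf _).ne'
  have hP : -(z - κ * f) * ((f ^ (-2 / 3 : ℝ) : ℝ) : ℂ) =
      -z * ((f ^ (-2 / 3 : ℝ) : ℝ) : ℂ) + κ * ((f ^ (1 / 3 : ℝ) : ℝ) : ℂ) := by
    rw [← hfs]; push_cast; ring
  have hQ : -(z + κ * f) * ((f ^ (-2 / 3 : ℝ) : ℝ) : ℂ) =
      -z * ((f ^ (-2 / 3 : ℝ) : ℝ) : ℂ) - κ * ((f ^ (1 / 3 : ℝ) : ℝ) : ℂ) := by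
    rw [← hfs]; push_cast; ring
  have hω (u v : ℂ) : -ωc * u * v = ωc * (-u * v) := by ring
  rw [Df, alphaP, alphaM, betaP, betaM, hω, hω, hP, hQ, hW, rescaledDet, airyCross]
  simp only [airyProd]
  have hw := airyWronskian_ne_zero
  field_simp

theorem Df_div_Df_zero (κ η : ℝ) {f : ℝ} (hf : 0 < f) (z : ℂ) :
    Df κ η f z / Df κ η f 0 =
      rescaledDet κ η (f ^ (1 / 3 : ℝ)) (-z * ((f ^ (-2 / 3 : ℝ) : ℝ) : ℂ)) /
        rescaledDet κ η (f ^ (1 / 3 : ℝ)) 0 := by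
  have hx : ((f ^ (1 / 3 : ℝ) : ℝ) : ℂ) ≠ 0 := mod_cast (rpow_pos_of_pos hf _).ne'
  rw [← mul_div_mul_left _ _ hx, mul_Df_eq_rescaledDet κ η hf, mul_Df_eq_rescaledDet κ η hf,
    neg_zero, zero_mul]

theorem tendsto_airyCross_add_sub_div (κ : ℝ) (q : ℂ) :
    Tendsto (fun x : ℝ => airyCross (q + κ * x) (q - κ * x) / x) (𝓝[>] 0)
      (𝓝 (2 * airyWronskian * κ)) := by
  have hlin : HasDerivAt (fun x : ℝ => (κ : ℂ) * x) κ 0 := by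
    simpa using (Complex.ofRealCLM.hasDerivAt (x := (0 : ℝ))).const_mul (κ : ℂ)
  have hderiv : HasDerivAt (fun x : ℝ => airyCross (q + κ * x) (q - κ * x))
      (2 * airyWronskian * κ) 0 :=
    HasDerivAt.comp (h₂ := fun h => airyCross (q + h) (q - h)) 0
      (by simpa using hasDerivAt_airyCross_add_sub q) hlin
  simpa [airyCross, div_eq_inv_mul] using hderiv.tendsto_slope_zero_right

theorem tendsto_rescaledDet_zero (κ : ℝ) {η : ℝ} (hη : η ≠ 0) (q : ℂ) :
    Tendsto (fun x => rescaledDet κ η x q) (𝓝[>] 0)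
      (𝓝 (2 * (κ + η) / (η ^ 2 * airyWronskian) * airyProd q q)) := by
  have hAi := isAirySolution_Ai.differentiable.continuous
  have hdiag : Tendsto (fun x : ℝ => (x : ℂ) + (airyProd (q + κ * x) (q + κ * x) +
      airyProd (q - κ * x) (q - κ * x)) / (η * airyWronskian)) (𝓝[>] 0)
      (𝓝 (2 * airyProd q q / (η * airyWronskian))) := by
    unfold airyProd
    exact (Continuous.tendsto' (by fun_prop) _ _ (by simp [two_mul])).mono_left nhdsWithin_le_nhds
  have hoff : Tendsto (fun x : ℝ => airyProd (q - κ * x) (q + κ * x)) (𝓝[>] 0)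
      (𝓝 (airyProd q q)) := by
    unfold airyProd
    exact (Continuous.tendsto' (by fun_prop) _ _ (by simp)).mono_left nhdsWithin_le_nhds
  have hvalue : 2 * (κ + η) / (η ^ 2 * airyWronskian) * airyProd q q =
      2 * airyProd q q / (η * airyWronskian) +
        airyProd q q * (2 * airyWronskian * κ) / (η ^ 2 * airyWronskian ^ 2) := by
    have hw := airyWronskian_ne_zero
    have hη' : (η : ℂ) ≠ 0 := mod_cast hη
    field
  rw [hvalue]
  exact hdiag.add ((hoff.mul (tendsto_airyCross_add_sub_div κ q)).div_const _)

theorem exists_pos_eventually_le_norm_rescaledDet_zero {κ η : ℝ} (hη : η ≠ 0) (hκη : κ + η ≠ 0) :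
    ∃ A > 0, ∀ᶠ x in 𝓝[>] 0, A ≤ ‖rescaledDet κ η x 0‖ := by
  set limit : ℂ := 2 * (κ + η) / (η ^ 2 * airyWronskian) * airyProd 0 0
  have hlimit : limit ≠ 0 := by
    have hη' : (η : ℂ) ≠ 0 := mod_cast hη
    have hκη' : (κ + η : ℂ) ≠ 0 := mod_cast hκη
    have hprod : airyProd 0 0 ≠ 0 := by simp [airyProd, Ai_zero_ne_zero]
    exact mul_ne_zero (div_ne_zero (mul_ne_zero two_ne_zero hκη')
      (mul_ne_zero (pow_ne_zero 2 hη') airyWronskian_ne_zero)) hprod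
  exact ⟨‖limit‖ / 2, by positivity, ((tendsto_rescaledDet_zero κ hη 0).norm.eventually
    (lt_mem_nhds (half_lt_self (norm_pos_iff.mpr hlimit)))).mono fun _ => le_of_lt⟩

theorem norm_airyCross_add_sub_div_le {κ x m : ℝ} {q : ℂ} (hx0 : 0 < x) (hx1 : x ≤ 1)
    (hadd : ‖q + κ * x‖ ≤ m) (hsub : ‖q - κ * x‖ ≤ m) :
    ‖airyCross (q + κ * x) (q - κ * x) / x‖ ≤ |κ| / π * exp (2 * |κ| * (1 + m)) := by
  have hm : 0 ≤ m := (norm_nonneg _).trans hadd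
  have hdist : ‖q + κ * x - (q - κ * x)‖ = 2 * |κ| * x := by
    rw [show q + κ * x - (q - κ * x) = 2 * κ * x by ring, norm_mul, norm_mul, Complex.norm_ofNat,
      Complex.norm_real, Complex.norm_of_nonneg hx0.le, norm_eq_abs]
  have hexp : exp ((1 + m) * (2 * |κ| * x)) ≤ exp (2 * |κ| * (1 + m)) := by
    rw [mul_comm (1 + m), mul_right_comm, exp_le_exp]
    exact mul_le_of_le_one_right (by positivity) hx1
  rw [norm_div, Complex.norm_of_nonneg hx0.le, div_le_iff₀ hx0]
  calc _ ≤ 1 / (2 * π) * exp ((1 + m) * (2 * |κ| * x)) * (2 * |κ| * x) :=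
        hdist ▸ norm_airyCross_le hadd hsub
    _ ≤ 1 / (2 * π) * exp (2 * |κ| * (1 + m)) * (2 * |κ| * x) := by gcongr
    _ = _ := by field

theorem exists_pos_norm_rescaledDet_le (κ η : ℝ) :
    ∃ K > 0, ∀ {x m : ℝ} {q : ℂ}, 0 < x → x ≤ 1 → ‖q‖ + |κ| ≤ m →
      ‖rescaledDet κ η x q‖ ≤ K * exp (4 / 3 * m ^ (3 / 2 : ℝ) + (2 + 2 * |κ|) * (1 + m)) := by
  set C := (‖airyCoeff 0‖ + ‖airyCoeff 1‖) ^ 2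
  refine ⟨1 + 4 * π * C / |η| + 4 * π * |κ| * C / η ^ 2, by positivity,
    fun {x m q} hx0 hx1 hm => ?_⟩
  set P : ℂ := q + κ * x
  set Q : ℂ := q - κ * x
  have hm0 : 0 ≤ m := (by positivity : 0 ≤ ‖q‖ + |κ|).trans hm
  have hκx : ‖(κ * x : ℂ)‖ ≤ |κ| := by
    rw [norm_mul, Complex.norm_real, Complex.norm_of_nonneg hx0.le]
    exact mul_le_of_le_one_right (abs_nonneg κ) hx1
  have hP : ‖P‖ ≤ m := (norm_add_le _ _).trans (by linarith)
  have hQ : ‖Q‖ ≤ m := (norm_sub_le _ _).trans (by linarith)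
  set E := exp (2 * m + 4 / 3 * m ^ (3 / 2 : ℝ))
  set G := exp (2 * |κ| * (1 + m))
  set B := exp (4 / 3 * m ^ (3 / 2 : ℝ) + (2 + 2 * |κ|) * (1 + m))
  have hB : 1 ≤ B := one_le_exp (by positivity)
  have hEG : E * G ≤ B := by rw [← exp_add, exp_le_exp]; linarith
  have hE : E ≤ B := (le_mul_of_one_le_right (exp_pos _).le (one_le_exp (by positivity))).trans hEG
  have hdiag : ‖(airyProd P P + airyProd Q Q) / (η * airyWronskian)‖ ≤ 4 * π * C / |η| * B := by
    rw [norm_div, norm_mul, Complex.norm_real, norm_eq_abs, norm_airyWronskian]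
    calc _ ≤ (C * E + C * E) / (|η| * (1 / (2 * π))) := by
          gcongr
          exact norm_add_le_of_le (norm_airyProd_le hP hP) (norm_airyProd_le hQ hQ)
      _ = 4 * π * C / |η| * E := by field
      _ ≤ _ := by gcongr
  have hoff : ‖airyProd Q P * (airyCross P Q / x) / (η ^ 2 * airyWronskian ^ 2)‖ ≤
      4 * π * |κ| * C / η ^ 2 * B := by
    rw [norm_div, norm_mul, norm_mul, norm_pow, norm_pow, Complex.norm_real, norm_eq_abs, sq_abs,
      norm_airyWronskian]
    calc _ ≤ C * E * (|κ| / π * G) / (η ^ 2 * (1 / (2 * π)) ^ 2) := by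
          gcongr
          exacts [norm_airyProd_le hQ hP, norm_airyCross_add_sub_div_le hx0 hx1 hP hQ]
      _ = 4 * π * |κ| * C / η ^ 2 * (E * G) := by field
      _ ≤ _ := by gcongr
  have hx : ‖(x : ℂ)‖ ≤ 1 * B := by rw [Complex.norm_of_nonneg hx0.le]; linarith
  rw [add_mul, add_mul]
  exact norm_add_le_of_le (norm_add_le_of_le hx hdiag) hoff

open Asymptotics in
theorem isEquivalent_rpow_add_const_add_linear {p : ℝ} (hp : 1 < p) (b d K : ℝ) :
    (fun τ : ℝ => (τ + b) ^ p + d * τ + K) ~[atTop] fun τ => τ ^ p := by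
  have habs : (fun τ : ℝ => τ) =ᶠ[atTop] abs :=
    (eventually_ge_atTop 0).mono fun τ hτ => (abs_of_nonneg hτ).symm
  have hshift : (fun τ : ℝ => τ + b) ~[atTop] abs :=
    (IsEquivalent.refl.add_isLittleO (isLittleO_const_id_atTop b)).congr_right habs
  have hpow : (fun τ : ℝ => (τ + b) ^ p) ~[atTop] fun τ => τ ^ p :=
    (hshift.rpow abs_nonneg).congr_right (habs.mono fun τ hτ => congrArg (· ^ p) hτ.symm)
  have hid : (id : ℝ → ℝ) =o[atTop] fun τ => τ ^ p := by
    refine isLittleO_of_tendsto' ?_ ((tendsto_rpow_neg_atTop (sub_pos.mpr hp)).congr' ?_) <;>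
      filter_upwards [eventually_gt_atTop 0] with τ hτ
    · exact fun h => absurd h (rpow_pos_of_pos hτ p).ne'
    · rw [neg_sub, rpow_sub hτ, rpow_one, id]
  exact (hpow.add_isLittleO (hid.const_mul_left d)).add_isLittleO
    ((isLittleO_const_id_atTop K).trans hid)

theorem eventually_norm_rescaledDet_le (κ η : ℝ) {A c : ℝ} (hA : 0 < A) (hc : 1 < c) :
    ∀ᶠ τ : ℝ in atTop, ∀ {x : ℝ} {q : ℂ}, 0 < x → x ≤ 1 → ‖q‖ ≤ τ →
      ‖rescaledDet κ η x q‖ ≤ A * exp (c * (4 / 3 * τ ^ (3 / 2 : ℝ))) := by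
  obtain ⟨K, hK, hbound⟩ := exists_pos_norm_rescaledDet_le κ η
  have hequiv := isEquivalent_rpow_add_const_add_linear (by norm_num : (1 : ℝ) < 3 / 2) |κ|
    (3 / 4 * (2 + 2 * |κ|)) (3 / 4 * ((2 + 2 * |κ|) * (1 + |κ|) + log (K / A)))
  filter_upwards [hequiv.isLittleO.bound (sub_pos.mpr hc), eventually_ge_atTop 0]
    with τ hτ hτ0 x q hx0 hx1 hq
  have hexponent : 4 / 3 * (τ + |κ|) ^ (3 / 2 : ℝ) + (2 + 2 * |κ|) * (1 + (τ + |κ|)) + log (K / A) ≤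
      c * (4 / 3 * τ ^ (3 / 2 : ℝ)) := by
    rw [Pi.sub_apply, norm_of_nonneg (rpow_nonneg hτ0 _)] at hτ
    linarith [(le_norm_self _).trans hτ]
  calc ‖rescaledDet κ η x q‖ ≤ K * exp (4 / 3 * (τ + |κ|) ^ (3 / 2 : ℝ) +
        (2 + 2 * |κ|) * (1 + (τ + |κ|))) := hbound hx0 hx1 (by gcongr)
    _ = A * exp (4 / 3 * (τ + |κ|) ^ (3 / 2 : ℝ) +
        (2 + 2 * |κ|) * (1 + (τ + |κ|)) + log (K / A)) := by
      rw [exp_add _ (log _), exp_log (by positivity)]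
      field
    _ ≤ _ := by gcongr

theorem eventually_norm_Df_div_le {κ η a c : ℝ} (hη : η ≠ 0) (hκη : κ + η ≠ 0) (ha : a < 2 / 3)
    (hc : 1 < c) :
    ∀ᶠ f in 𝓝[>] 0, Df κ η f 0 ≠ 0 ∧ ∀ ρ : ℝ, f ^ a ≤ ρ → ∀ z : ℂ, ‖z‖ ≤ ρ →
      ‖Df κ η f z / Df κ η f 0‖ ≤ exp (c * 4 * ρ ^ (3 / 2 : ℝ) / (3 * f)) := by
  obtain ⟨A, hA, hlower⟩ := exists_pos_eventually_le_norm_rescaledDet_zero hη hκη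
  obtain ⟨τ₀, hupper⟩ := eventually_atTop.mp (eventually_norm_rescaledDet_le κ η hA hc)
  have hroot : Tendsto (fun f : ℝ => f ^ (1 / 3 : ℝ)) (𝓝[>] 0) (𝓝[>] 0) :=
    tendsto_nhdsWithin_iff.mpr
      ⟨((continuous_rpow_const (by norm_num)).tendsto' 0 0 (zero_rpow (by norm_num))).mono_left
        nhdsWithin_le_nhds, eventually_mem_nhdsWithin.mono fun f hf => rpow_pos_of_pos hf _⟩
  have hradius : ∀ᶠ f : ℝ in 𝓝[>] 0, τ₀ ≤ f ^ (a + -2 / 3) :=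
    (tendsto_rpow_neg_nhdsGT_zero (by linarith)).eventually_ge_atTop τ₀
  filter_upwards [hroot.eventually hlower, hradius, Ioo_mem_nhdsGT one_pos]
    with f hflower hfτ ⟨hf0, hf1⟩
  have hD0 : Df κ η f 0 ≠ 0 := by
    refine right_ne_zero_of_mul (a := ((f ^ (1 / 3 : ℝ) : ℝ) : ℂ)) ?_
    rw [mul_Df_eq_rescaledDet κ η hf0, neg_zero, zero_mul]
    exact norm_pos_iff.mp (hA.trans_le hflower)
  refine ⟨hD0, fun ρ hρ z hz => ?_⟩
  have hρ0 : 0 ≤ ρ := (rpow_nonneg hf0.le a).trans hρ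
  have hs0 : 0 ≤ f ^ (-2 / 3 : ℝ) := rpow_nonneg hf0.le _
  have hτ : τ₀ ≤ ρ * f ^ (-2 / 3 : ℝ) := by
    rw [rpow_add hf0] at hfτ
    exact hfτ.trans (by gcongr)
  have hq : ‖-z * ((f ^ (-2 / 3 : ℝ) : ℝ) : ℂ)‖ ≤ ρ * f ^ (-2 / 3 : ℝ) := by
    rw [norm_mul, norm_neg, Complex.norm_of_nonneg hs0]
    gcongr
  have hx1 : f ^ (1 / 3 : ℝ) ≤ 1 := rpow_le_one hf0.le hf1.le (by norm_num)
  have hexponent : c * (4 / 3 * (ρ * f ^ (-2 / 3 : ℝ)) ^ (3 / 2 : ℝ)) =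
      c * 4 * ρ ^ (3 / 2 : ℝ) / (3 * f) := by
    rw [mul_rpow hρ0 hs0, ← rpow_mul hf0.le,
      show (-2 / 3 * (3 / 2) : ℝ) = -1 by norm_num, rpow_neg_one]
    field
  rw [Df_div_Df_zero κ η hf0, norm_div, div_le_iff₀' (hA.trans_le hflower), ← hexponent]
  exact (hupper _ hτ (rpow_pos_of_pos hf0 _) hx1 hq).trans (by gcongr)

end ResonanceDeterminant

theorem stmt13_general (κ η a c δ : ℝ) (hη : η ≠ 0) (hκη : κ + η ≠ 0) (ha : a < 2 / 3)
    (hc : 1 < c) (hδ0 : 0 < δ) (hδ1 : δ < 1) :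
    ∃ f₀ > (0 : ℝ), ∀ f : ℝ, 0 < f → f < f₀ →
      Df κ η f 0 ≠ 0 ∧
      ∀ R : ℝ, f ^ a < R → ∃ r : ℝ, (1 - δ) * R < r ∧ r < R ∧
        ∀ z : ℂ, ‖z‖ = r →
          (Real.exp (-7) * δ) ^ (c * 4 * (2 * Real.exp 1 * R) ^ ((3 : ℝ) / 2) / (3 * f)) ≤
            ‖Df κ η f z / Df κ η f 0‖ := by
  obtain ⟨f₀, hf₀, hsmall⟩ :=
    mem_nhdsGT_iff_exists_Ioo_subset.mp (eventually_norm_Df_div_le hη hκη ha hc)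
  refine ⟨f₀, hf₀, fun f hf hff₀ => ?_⟩
  obtain ⟨hD0, hgrowth⟩ := hsmall ⟨hf, hff₀⟩
  refine ⟨hD0, fun R hR => ?_⟩
  have hR0 : 0 < R := (rpow_pos_of_pos hf a).trans hR
  have hradius : f ^ a ≤ 2 * exp 1 * R :=
    hR.le.trans (le_mul_of_one_le_left hR0.le (by linarith [one_le_exp zero_le_one]))
  exact exists_circle_rpow_le_norm (F := fun z => Df κ η f z / Df κ η f 0)
    ((differentiable_Df κ η f).div_const _) (by simp [hD0]) hR0 (by positivity) hδ0 hδ1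
    (hgrowth _ hradius)

/-- Cartan-type lower bound for the normalized determinant `B_f = D_f/D_f(0)`
on a circle of radius `r` close to any given `R > f^a`. -/
theorem stmt13 (κ η a c δ : ℝ) (hκ : 0 < κ) (hη : 0 < η)
    (ha0 : 0 < a) (ha1 : a < 1 / 2) (hc : 1 < c) (hδ0 : 0 < δ) (hδ1 : δ < 1) :
    ∃ f₀ > (0 : ℝ), ∀ f : ℝ, 0 < f → f < f₀ →
      Df κ η f 0 ≠ 0 ∧
      ∀ R : ℝ, f ^ a < R → ∃ r : ℝ, (1 - δ) * R < r ∧ r < R ∧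
        ∀ z : ℂ, ‖z‖ = r →
          (Real.exp (-7) * δ) ^ (c * 4 * (2 * Real.exp 1 * R) ^ ((3 : ℝ) / 2) / (3 * f)) ≤
            ‖Df κ η f z / Df κ η f 0‖ :=
  stmt13_general κ η a c δ hη.ne' (add_pos hκ hη).ne' (by linarith) hc hδ0 hδ1
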